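/- arXiv:2511.18377 — 2 statements merged into one kernel-verified Lean document; each statement's English description precedes it below -/
import Mathlib

section
/- Let n ≥ 1 and p ≥ 1, let a : Finset (Fin n) → ℝ be a coefficient assignment vanishing on every subset of odd cardinality, and consider the QAOA with initial Hamiltonian H_i = −∑_{i} X i, final Hamiltonian H_f = ∑_{S : Finset (Fin n)} (a S) • ∏_{i ∈ S} Z i (only terms with an even number of spin interactions), and initial state ψ₀ = ψ₊. Then the energy landscape is periodic in each β variable with period π: for every index l, ⟨H_f⟩(β₁, …, β_l + π, …, β_p, γ) = ⟨H_f⟩(β, γ) for all β, γ ∈ ℝ^p. -/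
open Complex Matrix

/-- Pauli-X on qubit `i` of `n` qubits. -/
def PauliX (n : ℕ) (i : Fin n) : Matrix (Fin n → Fin 2) (Fin n → Fin 2) ℂ :=
  fun x y => if (∀ j, j ≠ i → x j = y j) ∧ x i ≠ y i then 1 else 0

/-- Pauli-Z on qubit `i` of `n` qubits. -/
def PauliZ (n : ℕ) (i : Fin n) : Matrix (Fin n → Fin 2) (Fin n → Fin 2) ℂ :=
  Matrix.diagonal fun x => (-1 : ℂ) ^ (x i : ℕ)

/-- Flip bit `i` of a bit string. -/
def bitFlip (n : ℕ) (i : Fin n) (x : Fin n → Fin 2) : Fin n → Fin 2 :=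
  Function.update x i (x i + 1)

lemma pauliX_cond_iff (n : ℕ) (i : Fin n) (x y : Fin n → Fin 2) :
    ((∀ j, j ≠ i → x j = y j) ∧ x i ≠ y i) ↔ y = bitFlip n i x := by
  constructor
  · rintro ⟨h1, h2⟩
    funext j
    by_cases hj : j = i
    · subst hj
      simp only [bitFlip, Function.update_self]
      revert h2
      generalize x j = a; generalize y j = b
      revert a b; decide
    · rw [bitFlip, Function.update_of_ne hj]
      exact (h1 j hj).symm
  · rintro rfl
    refine ⟨fun j hj => ?_, ?_⟩
    · rw [bitFlip, Function.update_of_ne hj]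
    · simp only [bitFlip, Function.update_self]
      generalize x i = a
      revert a; decide

lemma pauliX_eq (n : ℕ) (i : Fin n) :
    PauliX n i = fun x y => if y = bitFlip n i x then 1 else 0 := by
  funext x y
  rw [PauliX, if_congr (pauliX_cond_iff n i x y) rfl rfl]

lemma pauliX_mul_pauliX (n : ℕ) (i j : Fin n) :
    PauliX n i * PauliX n j
      = fun x y => if y = bitFlip n j (bitFlip n i x) then 1 else 0 := by
  funext x y
  rw [Matrix.mul_apply]
  simp only [pauliX_eq]
  rw [Finset.sum_eq_single (bitFlip n i x)]
  · simp
  · intro z _ hz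
    rw [if_neg hz, zero_mul]
  · intro h; exact absurd (Finset.mem_univ _) h

lemma bitFlip_comm (n : ℕ) (i j : Fin n) (x : Fin n → Fin 2) :
    bitFlip n j (bitFlip n i x) = bitFlip n i (bitFlip n j x) := by
  rcases eq_or_ne i j with rfl | h
  · rfl
  · simp only [bitFlip, Function.update_of_ne h, Function.update_of_ne (Ne.symm h),
      Function.update_self]
    exact Function.update_comm h _ _ x

lemma pauliX_commute (n : ℕ) (i j : Fin n) : Commute (PauliX n i) (PauliX n j) := by
  show _ * _ = _ * _
  rw [pauliX_mul_pauliX, pauliX_mul_pauliX]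
  funext x y
  rw [bitFlip_comm]

lemma pauliZ_commute (n : ℕ) (i j : Fin n) : Commute (PauliZ n i) (PauliZ n j) := by
  show _ * _ = _ * _
  simp only [PauliZ, Matrix.diagonal_mul_diagonal]
  have h : (fun x : Fin n → Fin 2 => (-1 : ℂ) ^ (x i : ℕ) * (-1) ^ (x j : ℕ))
      = fun x : Fin n → Fin 2 => (-1 : ℂ) ^ (x j : ℕ) * (-1) ^ (x i : ℕ) := by
    funext x; ring
  rw [h]

/-- The flip-all operator `∏ i, X i`. -/
def flipAll (n : ℕ) : Matrix (Fin n → Fin 2) (Fin n → Fin 2) ℂ :=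
  Finset.univ.noncommProd (PauliX n) fun a _ b _ _ => pauliX_commute n a b

/-- The parity operator `∏ i ∈ S, Z i`. -/
def ZProd (n : ℕ) (S : Finset (Fin n)) : Matrix (Fin n → Fin 2) (Fin n → Fin 2) ℂ :=
  S.noncommProd (PauliZ n) fun a _ b _ _ => pauliZ_commute n a b

/-- The uniform superposition state. -/
noncomputable def psiPlus (n : ℕ) : (Fin n → Fin 2) → ℂ :=
  fun _ => (((Real.sqrt 2)⁻¹ : ℝ) : ℂ) ^ n

/-- A single QAOA layer `exp(-(i β/2) H_i) * exp(-(i γ/2) H_f)`. -/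
noncomputable def qaoaLayer {m : Type} [Fintype m] [DecidableEq m]
    (Hi Hf : Matrix m m ℂ) (β γ : ℝ) : Matrix m m ℂ :=
  NormedSpace.exp ((-(Complex.I * (β : ℂ) / 2)) • Hi) *
    NormedSpace.exp ((-(Complex.I * (γ : ℂ) / 2)) • Hf)

/-- The QAOA output state `L(β_p,γ_p) ⋯ L(β_1,γ_1) ψ₀`. -/
noncomputable def qaoaState {m : Type} [Fintype m] [DecidableEq m] (p : ℕ)
    (Hi Hf : Matrix m m ℂ) (psi0 : m → ℂ) (β γ : Fin p → ℝ) : m → ℂ :=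
  (((List.finRange p).reverse.map fun k => qaoaLayer Hi Hf (β k) (γ k)).prod).mulVec psi0

/-- The QAOA energy landscape `⟨ψ(β,γ), H_f ψ(β,γ)⟩`. -/
noncomputable def qaoaEnergy {m : Type} [Fintype m] [DecidableEq m] (p : ℕ)
    (Hi Hf : Matrix m m ℂ) (psi0 : m → ℂ) (β γ : Fin p → ℝ) : ℂ :=
  ∑ x, (starRingEnd ℂ) (qaoaState p Hi Hf psi0 β γ x) *
    Hf.mulVec (qaoaState p Hi Hf psi0 β γ) x


lemma exp_smul_idem {m : Type} [Fintype m] [DecidableEq m] (P : Matrix m m ℂ) (hP : P * P = P)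
    (t : ℂ) : NormedSpace.exp (t • P) = 1 + (Complex.exp t - 1) • P := by
  rw [NormedSpace.exp_eq_tsum ℂ]
  have h1 : HasSum (fun k : ℕ => ((k.factorial : ℂ)⁻¹ * t ^ k)) (Complex.exp t) := by
    have := NormedSpace.expSeries_div_hasSum_exp t
    rw [← Complex.exp_eq_exp_ℂ] at this
    refine this.congr_fun ?_
    intro k
    rw [div_eq_inv_mul]
  have h2 : HasSum (fun k : ℕ => ((k.factorial : ℂ)⁻¹ * t ^ k) • P) (Complex.exp t • P) :=
    h1.smul_const P
  have h3 : HasSum (fun k : ℕ => if k = 0 then (1 - P) else 0) (1 - P) :=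
    hasSum_ite_eq 0 (1 - P)
  have h4 := h2.add h3
  have h5 : ∀ k : ℕ, P ^ (k + 1) = P := by
    intro k
    induction k with
    | zero => simp
    | succ k ih => rw [pow_succ, ih, hP]
  have h6 : (fun k : ℕ => ((k.factorial : ℂ)⁻¹ * t ^ k) • P + if k = 0 then (1 - P) else 0)
      = fun k : ℕ => ((k.factorial : ℂ)⁻¹) • (t • P) ^ k := by
    funext k
    cases k with
    | zero => simp
    | succ k => rw [smul_pow, h5, smul_smul]; simp
  rw [h6] at h4
  show (∑' k : ℕ, ((k.factorial : ℂ)⁻¹) • (t • P) ^ k) = _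
  rw [h4.tsum_eq, sub_smul, one_smul]
  abel

lemma exp_pauli_like {m : Type} [Fintype m] [DecidableEq m] (X : Matrix m m ℂ) (hX : X * X = 1) :
    NormedSpace.exp ((Complex.I * Real.pi / 2) • X) = Complex.I • X := by
  have hP : ((1 / 2 : ℂ) • (1 + X)) * ((1 / 2 : ℂ) • (1 + X)) = (1 / 2 : ℂ) • (1 + X) := by
    rw [smul_mul_smul_comm, mul_add, add_mul, add_mul, hX, one_mul, mul_one, one_mul]
    module
  have hQ : ((1 : Matrix m m ℂ)) * 1 = 1 := one_mul 1
  have e : (Complex.I * Real.pi / 2) • X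
      = (-(Complex.I * Real.pi / 2)) • (1 : Matrix m m ℂ)
        + (Complex.I * Real.pi) • ((1 / 2 : ℂ) • (1 + X)) := by module
  rw [e, Matrix.exp_add_of_commute _ _ ((Commute.one_left _).smul_left _), exp_smul_idem _ hP,
    exp_smul_idem _ hQ]
  have e1 : Complex.exp (Complex.I * Real.pi) = -1 := by
    rw [mul_comm]; exact Complex.exp_pi_mul_I
  have e2 : Complex.exp (-(Complex.I * Real.pi / 2)) = -Complex.I := by
    rw [show -(Complex.I * Real.pi / 2) = -(Real.pi : ℂ) / 2 * Complex.I by ring]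
    exact Complex.exp_neg_pi_div_two_mul_I
  rw [e1, e2]
  have : (1 : Matrix m m ℂ) + (-Complex.I - 1) • 1 = (-Complex.I) • 1 := by module
  rw [this, smul_mul_assoc, one_mul]
  module

lemma pauliX_sq (n : ℕ) (i : Fin n) : PauliX n i * PauliX n i = 1 := by
  rw [pauliX_mul_pauliX]
  have : ∀ x, bitFlip n i (bitFlip n i x) = x := by
    intro x
    simp only [bitFlip, Function.update_self, Function.update_idem]
    have h : x i + 1 + 1 = x i := by
      generalize x i = a
      revert a; decide
    rw [h, Function.update_eq_self]
  funext x y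
  rw [this, Matrix.one_apply]
  simp only [eq_comm]

lemma pauliX_pauliZ (n : ℕ) (i j : Fin n) :
    PauliX n i * PauliZ n j = (if j = i then (-1 : ℂ) else 1) • (PauliZ n j * PauliX n i) := by
  ext x y
  rw [PauliZ, Matrix.smul_apply, Matrix.mul_diagonal, Matrix.diagonal_mul, pauliX_eq]
  by_cases hy : y = bitFlip n i x
  · subst hy
    by_cases h : j = i
    · subst h
      simp only [bitFlip, Function.update_self, if_true]
      generalize x j = a
      fin_cases a <;> simp
    · simp [bitFlip, h]
  · simp [hy]

lemma pauliX_ZProd (n : ℕ) (i : Fin n) (S : Finset (Fin n)) :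
    PauliX n i * ZProd n S = (if i ∈ S then (-1 : ℂ) else 1) • (ZProd n S * PauliX n i) := by
  induction S using Finset.induction_on with
  | empty =>
    have e : ZProd n ∅ = 1 := Finset.noncommProd_empty _ _
    simp [e]
  | insert j S hj ih =>
    have e : ZProd n (insert j S) = PauliZ n j * ZProd n S :=
      Finset.noncommProd_insert_of_notMem _ _ _ _ hj
    rw [e, ← mul_assoc, pauliX_pauliZ, smul_mul_assoc, mul_assoc, ih, mul_smul_comm, smul_smul,
      mul_assoc]
    congr 1
    by_cases h : j = i
    · subst h; simp [hj]
    · have h' : i ≠ j := fun q => h q.symm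
      simp [h, h']

lemma pauliX_psiPlus (n : ℕ) (i : Fin n) : (PauliX n i).mulVec (psiPlus n) = psiPlus n := by
  funext x
  simp [Matrix.mulVec, dotProduct, pauliX_eq, psiPlus]

/-- The partial rotation by `π`. -/
noncomputable def rotX (n : ℕ) (s : Finset (Fin n)) : Matrix (Fin n → Fin 2) (Fin n → Fin 2) ℂ :=
  NormedSpace.exp (∑ i ∈ s, (Complex.I * Real.pi / 2) • PauliX n i)

lemma rotX_insert (n : ℕ) (s : Finset (Fin n)) (i : Fin n) (hi : i ∉ s) :
    rotX n (insert i s) = Complex.I • (PauliX n i * rotX n s) := by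
  rw [rotX, Finset.sum_insert hi, Matrix.exp_add_of_commute, exp_pauli_like _ (pauliX_sq n i),
    smul_mul_assoc, rotX]
  exact Commute.sum_right _ _ _ fun j _ =>
    ((pauliX_commute n i j).smul_left _).smul_right _

lemma rotX_psiPlus (n : ℕ) (s : Finset (Fin n)) :
    (rotX n s).mulVec (psiPlus n) = Complex.I ^ s.card • psiPlus n := by
  induction s using Finset.induction_on with
  | empty => simp [rotX]
  | insert i s hi ih =>
    rw [rotX_insert n s i hi, Matrix.smul_mulVec, ← Matrix.mulVec_mulVec, ih, Matrix.mulVec_smul,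
      pauliX_psiPlus, smul_smul, Finset.card_insert_of_notMem hi, pow_succ']

lemma rotX_ZProd (n : ℕ) (s S : Finset (Fin n)) :
    rotX n s * ZProd n S = (∏ i ∈ s, if i ∈ S then (-1 : ℂ) else 1) • (ZProd n S * rotX n s) := by
  induction s using Finset.induction_on with
  | empty => simp [rotX]
  | insert i s hi ih =>
    rw [rotX_insert n s i hi, smul_mul_assoc, mul_assoc, ih, mul_smul_comm, ← mul_assoc,
      pauliX_ZProd, smul_mul_assoc, mul_smul_comm, mul_assoc, smul_smul, smul_smul, smul_smul,
      Finset.prod_insert hi]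
    congr 1
    ring

lemma list_prod_update {ι M : Type*} [DecidableEq ι] [Monoid M] (U : M) (f g : ι → M) (l : ι)
    (hl : g l = U * f l) (hne : ∀ k, k ≠ l → g k = f k) (hU : ∀ k, Commute U (f k))
    (L : List ι) (hL : L.Nodup) :
    (L.map g).prod = (if l ∈ L then U else 1) * (L.map f).prod := by
  induction L with
  | nil => simp
  | cons k L ih =>
    rw [List.nodup_cons] at hL
    rw [List.map_cons, List.prod_cons, ih hL.2, List.map_cons, List.prod_cons]
    by_cases h : k = l
    · subst h
      simp [hL.1, hl, mul_assoc]
    · have h' : l ≠ k := fun q => h q.symm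
      rw [hne k h]
      by_cases hm : l ∈ L
      · simp only [hm, List.mem_cons, or_true, if_true]
        rw [← mul_assoc, ← (hU k).eq, mul_assoc]
      · simp [hm, h']

/-- **QAOA periodicity for PUBO problems.** For the mixer `H_i = -∑ X i` and a final
Hamiltonian `H_f = ∑_S a S • ∏_{i ∈ S} Z i` whose coefficients vanish on all subsets of
odd cardinality (only even-order spin interactions), starting from the uniform
superposition, the energy landscape is `π`-periodic in each `β` variable. -/
theorem qaoa_energy_beta_periodic_pubo (n p : ℕ) (hn : 1 ≤ n) (hp : 1 ≤ p)
    (a : Finset (Fin n) → ℝ) (ha_even : ∀ S : Finset (Fin n), Odd S.card → a S = 0)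
    (Hi Hf : Matrix (Fin n → Fin 2) (Fin n → Fin 2) ℂ)
    (hHi : Hi = -∑ i, PauliX n i)
    (hHf : Hf = ∑ S : Finset (Fin n), (a S : ℂ) • ZProd n S)
    (l : Fin p) (β γ : Fin p → ℝ) :
    qaoaEnergy p Hi Hf (psiPlus n) (Function.update β l (β l + Real.pi)) γ
      = qaoaEnergy p Hi Hf (psiPlus n) β γ := by
  have hUHi : Commute (rotX n Finset.univ) Hi := by
    rw [hHi]
    refine Commute.exp_left (Commute.neg_right ?_)
    refine Commute.sum_left _ _ _ fun i _ => Commute.sum_right _ _ _ fun j _ => ?_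
    exact (pauliX_commute n i j).smul_left _
  have hUHf : Commute (rotX n Finset.univ) Hf := by
    rw [hHf]
    refine Commute.sum_right _ _ _ fun S _ => ?_
    rcases Nat.even_or_odd S.card with h | h
    · refine Commute.smul_right ?_ _
      show _ * _ = _ * _
      rw [rotX_ZProd, Finset.prod_ite_mem, Finset.univ_inter, Finset.prod_const, h.neg_one_pow,
        one_smul]
    · rw [ha_even S h]
      simp
  have hUL : ∀ k, Commute (rotX n Finset.univ) (qaoaLayer Hi Hf (β k) (γ k)) := fun k =>
    Commute.mul_right (hUHi.smul_right _).exp_right (hUHf.smul_right _).exp_right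
  have hlayer : qaoaLayer Hi Hf (β l + Real.pi) (γ l)
      = rotX n Finset.univ * qaoaLayer Hi Hf (β l) (γ l) := by
    have e : (-(Complex.I * ((β l + Real.pi : ℝ) : ℂ) / 2)) • Hi
        = (∑ i, (Complex.I * Real.pi / 2) • PauliX n i) + (-(Complex.I * (β l : ℂ) / 2)) • Hi := by
      rw [← Finset.smul_sum, hHi]
      push_cast
      module
    have hc : Commute (∑ i, (Complex.I * Real.pi / 2) • PauliX n i)
        ((-(Complex.I * (β l : ℂ) / 2)) • Hi) := by
      rw [hHi]
      refine Commute.smul_right (Commute.neg_right ?_) _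
      refine Commute.sum_left _ _ _ fun i _ => Commute.sum_right _ _ _ fun j _ => ?_
      exact (pauliX_commute n i j).smul_left _
    rw [qaoaLayer, e, Matrix.exp_add_of_commute _ _ hc, mul_assoc]
    rfl
  have hstate : qaoaState p Hi Hf (psiPlus n) (Function.update β l (β l + Real.pi)) γ
      = Complex.I ^ n • qaoaState p Hi Hf (psiPlus n) β γ := by
    have hprod := list_prod_update (rotX n Finset.univ)
      (fun k => qaoaLayer Hi Hf (β k) (γ k))
      (fun k => qaoaLayer Hi Hf (Function.update β l (β l + Real.pi) k) (γ k)) l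
      (by simpa using hlayer) (fun k hk => by simp [hk]) hUL
      (List.finRange p).reverse (List.nodup_reverse.2 (List.nodup_finRange p))
    rw [if_pos (by simp)] at hprod
    have hcomm : Commute (rotX n Finset.univ)
        ((List.finRange p).reverse.map fun k => qaoaLayer Hi Hf (β k) (γ k)).prod := by
      refine Commute.list_prod_right _ _ fun x hx => ?_
      obtain ⟨k, _, rfl⟩ := List.mem_map.1 hx
      exact hUL k
    rw [qaoaState, hprod, hcomm.eq, ← Matrix.mulVec_mulVec, rotX_psiPlus, Matrix.mulVec_smul,
      Finset.card_univ, Fintype.card_fin]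
    rfl
  have hI : (starRingEnd ℂ) (Complex.I ^ n) * Complex.I ^ n = 1 := by
    rw [map_pow, ← mul_pow, Complex.conj_I]
    simp
  rw [qaoaEnergy, qaoaEnergy, hstate]
  refine Finset.sum_congr rfl fun x _ => ?_
  rw [Matrix.mulVec_smul, Pi.smul_apply, Pi.smul_apply, smul_eq_mul, smul_eq_mul, map_mul]
  rw [mul_mul_mul_comm, hI, one_mul]
end

section
/- For every n ≥ 2, every pair of distinct indices i, j : Fin n, and every real a, the flip-all operator commutes with the two-qubit phase gate: (∏_{k : Fin n} X k) * Matrix.exp(−(I*a/2) • (Z i * Z j)) = Matrix.exp(−(I*a/2) • (Z i * Z j)) * (∏_{k : Fin n} X k). -/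
open Complex Matrix

lemma pauliX_mul_pauliZ (n : ℕ) (k i : Fin n) :
    PauliX n k * PauliZ n i = (if i = k then (-1 : ℂ) else 1) • (PauliZ n i * PauliX n k) := by
  ext x y
  rw [PauliZ, Matrix.mul_diagonal, Matrix.smul_apply, Matrix.diagonal_mul, pauliX_eq]
  by_cases hy : y = bitFlip n k x
  · subst hy
    by_cases hik : i = k
    · subst hik
      simp only [bitFlip, Function.update_self, if_true]
      generalize x i = b
      fin_cases b <;> simp
    · simp [bitFlip, Function.update_of_ne hik, hik]
  · simp [hy]

lemma noncommProd_pauliX_mul_pauliZ (n : ℕ) (i : Fin n) (S : Finset (Fin n))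
    (comm : (S : Set (Fin n)).Pairwise (Function.onFun Commute (PauliX n))) :
    S.noncommProd (PauliX n) comm * PauliZ n i
      = (if i ∈ S then (-1 : ℂ) else 1) • (PauliZ n i * S.noncommProd (PauliX n) comm) := by
  induction S using Finset.induction_on with
  | empty => simp
  | insert k S hk ih =>
    rw [Finset.noncommProd_insert_of_notMem _ _ _ _ hk, mul_assoc, ih, mul_smul_comm,
      ← mul_assoc, pauliX_mul_pauliZ, smul_mul_assoc, smul_smul, mul_assoc]
    congr 1
    by_cases hik : i = k
    · subst hik; simp [hk]
    · simp [hik]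

lemma flipAll_mul_pauliZ (n : ℕ) (i : Fin n) :
    flipAll n * PauliZ n i = -(PauliZ n i * flipAll n) := by
  have h := noncommProd_pauliX_mul_pauliZ n i Finset.univ
    (fun a _ b _ _ => pauliX_commute n a b)
  rw [if_pos (Finset.mem_univ i), neg_one_smul] at h
  exact h

/-- **The flip-all operator commutes with the two-qubit phase gate
`exp(-(ia/2) Z i Z j)`.** -/
theorem flipAll_commute_exp_ZZ (n : ℕ) (hn : 2 ≤ n) (i j : Fin n) (hij : i ≠ j)
    (a : ℝ) :
    flipAll n * NormedSpace.exp ((-(Complex.I * (a : ℂ) / 2)) • (PauliZ n i * PauliZ n j))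
      = NormedSpace.exp ((-(Complex.I * (a : ℂ) / 2)) • (PauliZ n i * PauliZ n j))
        * flipAll n := by
  have h : Commute (flipAll n) (PauliZ n i * PauliZ n j) := by
    change _ * _ = _ * _
    rw [← mul_assoc, flipAll_mul_pauliZ, neg_mul, mul_assoc, flipAll_mul_pauliZ, mul_neg,
      neg_neg, mul_assoc]
  exact ((h.smul_right _).exp_right).eq
end
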